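/- (Proposition 4, relations between the length functionals.) Let C, D, m_h be positive integers with C ≥ 2D and m_h > D. Then max(D, m_v^L) ≤ m_v^N ≤ m_v^C ≤ m_v^S ≤ min(m_h, m_v^U), where m_v^L(C,D,m_h) := ⌈D·(m_h − D)/C⌉ and m_v^U(C,D,m_h) := D + ⌈D·(m_h − D)/(C + 1 − 2D)⌉, and m_v^N, m_v^C, m_v^S are the necessary, counting and sufficient lengths respectively (in particular m_v^S and m_v^N are finite under these hypotheses). -/

import Mathlib

open Finset

noncomputable section

/-- The `p`-th polyphase length `⌈(m - p)/D⌉`. -/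
def polyLen (D m p : ℕ) : ℤ := ⌈((m : ℚ) - (p : ℚ)) / (D : ℚ)⌉

/-- The sufficient-length condition. -/
def SuffLenCond (C D mh mv : ℕ) : Prop :=
  1 ≤ mv / D ∧
    ∑ p ∈ Finset.range D, ⌈((polyLen D mh p : ℚ) - 1) / ((mv / D : ℕ) : ℚ)⌉
      ≤ (C : ℤ) - (D : ℤ)

/-- The necessary-length condition. -/
def NecLenCond (C D mh mv : ℕ) : Prop :=
  1 ≤ mv / D ∧
    ∑ p ∈ Finset.range D, ⌊((polyLen D mh p : ℚ) - 1) / ((mv / D : ℕ) : ℚ)⌋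
      ≤ (C : ℤ) - (D : ℤ)

/-- The sufficient length `m_v^S(C,D,m_h)`. -/
def mvS (C D mh : ℕ) : ℕ := sInf {mv : ℕ | SuffLenCond C D mh mv}

/-- The necessary length `m_v^N(C,D,m_h)`. -/
def mvN (C D mh : ℕ) : ℕ := sInf {mv : ℕ | NecLenCond C D mh mv}

/-- The counting length `m_v^C(C,D,m_h) = D·⌈(m_h - D)/(C - D)⌉`. -/
def mvC (C D mh : ℕ) : ℤ := (D : ℤ) * ⌈((mh : ℚ) - (D : ℚ)) / ((C : ℚ) - (D : ℚ))⌉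

/-- The closed-form lower bound `m_v^L(C,D,m_h) = ⌈D·(m_h - D)/C⌉`. -/
def mvL (C D mh : ℕ) : ℤ := ⌈(D : ℚ) * ((mh : ℚ) - (D : ℚ)) / (C : ℚ)⌉

/-- The closed-form upper bound `m_v^U(C,D,m_h) = D + ⌈D·(m_h - D)/(C + 1 - 2D)⌉`. -/
def mvU (C D mh : ℕ) : ℤ :=
  (D : ℤ) + ⌈(D : ℚ) * ((mh : ℚ) - (D : ℚ)) / ((C : ℚ) + 1 - 2 * (D : ℚ))⌉

/-!
Both length conditions depend on `mv` only through `k = mv / D`. The polyphase lengths of `mh` add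
up to `mh`, so before rounding the summands of either condition add up to `(mh - D) / k`. Rounding
`D` summands down lowers their sum by at most `D`, and rounding them up raises it by less than `D`.
Hence the necessary condition implies `(mh - D) / k ≤ C` and follows from `(mh - D) / k ≤ C - D`,
while the sufficient condition implies `(mh - D) / k ≤ C - D` and follows from
`(mh - D) / k ≤ C + 1 - 2 * D`. Solving these four inequalities for `mv` gives every bound except
`D ≤ mvN`, which only says `1 ≤ k`, and `mvS ≤ mh`, which holds because for `mv = mh` each
rounded-up summand is at most `1`.
-/

section SumRounding

variable {ι R : Type*} [Ring R] [LinearOrder R] [IsStrictOrderedRing R] [FloorRing R]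

lemma sum_floor_le_sum (s : Finset ι) (f : ι → R) : ((∑ i ∈ s, ⌊f i⌋ : ℤ) : R) ≤ ∑ i ∈ s, f i := by
  rw [Int.cast_sum]
  exact sum_le_sum fun i _ ↦ Int.floor_le (f i)

lemma sum_le_sum_ceil (s : Finset ι) (f : ι → R) : ∑ i ∈ s, f i ≤ ((∑ i ∈ s, ⌈f i⌉ : ℤ) : R) := by
  rw [Int.cast_sum]
  exact sum_le_sum fun i _ ↦ Int.le_ceil (f i)

lemma sum_le_sum_floor_add_card (s : Finset ι) (f : ι → R) :
    ∑ i ∈ s, f i ≤ ((∑ i ∈ s, ⌊f i⌋ : ℤ) : R) + #s := by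
  calc ∑ i ∈ s, f i ≤ ∑ i ∈ s, ((⌊f i⌋ : R) + 1) :=
        sum_le_sum fun i _ ↦ (Int.lt_floor_add_one (f i)).le
    _ = ((∑ i ∈ s, ⌊f i⌋ : ℤ) : R) + #s := by simp [sum_add_distrib]

lemma sum_ceil_lt_sum_add_card {s : Finset ι} (hs : s.Nonempty) (f : ι → R) :
    ((∑ i ∈ s, ⌈f i⌉ : ℤ) : R) < ∑ i ∈ s, f i + #s := by
  calc ((∑ i ∈ s, ⌈f i⌉ : ℤ) : R) = ∑ i ∈ s, (⌈f i⌉ : R) := Int.cast_sum _ _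
    _ < ∑ i ∈ s, (f i + 1) := sum_lt_sum_of_nonempty hs fun i _ ↦ Int.ceil_lt_add_one (f i)
    _ = ∑ i ∈ s, f i + #s := by simp [sum_add_distrib]

end SumRounding

section PolyLen

variable {D : ℕ}

lemma polyLen_zero_left {p : ℕ} (hp : p < D) : polyLen D 0 p = 0 := by
  have hpD : (p : ℚ) < D := mod_cast hp
  have hD : (0 : ℚ) < D := p.cast_nonneg.trans_lt hpD
  rw [polyLen, Int.ceil_eq_zero_iff, Set.mem_Ioc, lt_div_iff₀ hD, div_le_iff₀ hD]
  constructor <;> simp [hpD]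

lemma polyLen_add_one_add_one (D m p : ℕ) : polyLen D (m + 1) (p + 1) = polyLen D m p := by
  simp [polyLen]

lemma polyLen_add_right_self (hD : 0 < D) (m p : ℕ) :
    polyLen D m (p + D) = polyLen D m p - 1 := by
  rw [polyLen, polyLen, ← Int.ceil_sub_one]
  congr 1
  push_cast
  field_simp
  ring

lemma polyLen_le_div_add_one (D m p : ℕ) : polyLen D m p ≤ (m / D : ℕ) + 1 := by
  rw [polyLen, Int.ceil_le]
  calc ((m : ℚ) - p) / D ≤ m / D := by gcongr; simp
    _ ≤ ⌊(m : ℚ) / D⌋₊ + 1 := (Nat.lt_floor_add_one _).le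
    _ = (((m / D : ℕ) + 1 : ℤ) : ℚ) := by rw [Nat.floor_div_eq_div]; push_cast; rfl

theorem sum_polyLen (hD : 0 < D) (m : ℕ) : ∑ p ∈ range D, polyLen D m p = m := by
  induction m with
  | zero => exact sum_eq_zero fun p hp ↦ polyLen_zero_left (mem_range.mp hp)
  | succ m ih =>
    -- Splitting off the last or the first term of the sum over `range (D + 1)` compares the
    -- sums for `m + 1` and `m`.
    have hsplit : ∑ p ∈ range D, polyLen D (m + 1) p + polyLen D (m + 1) D =
        ∑ p ∈ range D, polyLen D m p + polyLen D (m + 1) 0 := by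
      rw [← sum_range_succ, sum_range_succ']
      simp only [polyLen_add_one_add_one]
    have hperiod : polyLen D (m + 1) D = polyLen D (m + 1) 0 - 1 := by
      simpa using polyLen_add_right_self hD (m + 1) 0
    push_cast
    linarith

lemma sum_polyLen_sub_one_div (hD : 0 < D) (m : ℕ) (k : ℚ) :
    ∑ p ∈ range D, ((polyLen D m p : ℚ) - 1) / k = ((m : ℚ) - D) / k := by
  have hsum : ∑ p ∈ range D, (polyLen D m p : ℚ) = m := mod_cast sum_polyLen hD m
  rw [← sum_div, sum_sub_distrib, hsum]
  simp

end PolyLen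

section LengthConditions

variable {C D mh mv : ℕ}

lemma necLenCond_of_sub_div_le (hk : 1 ≤ mv / D)
    (h : ((mh : ℚ) - D) / (mv / D : ℕ) ≤ C - D) : NecLenCond C D mh mv := by
  refine ⟨hk, ?_⟩
  rw [← sum_polyLen_sub_one_div (Nat.div_pos_iff.mp hk).1] at h
  exact_mod_cast (sum_floor_le_sum _ _).trans h

lemma NecLenCond.sub_div_le (h : NecLenCond C D mh mv) :
    ((mh : ℚ) - D) / (mv / D : ℕ) ≤ C := by
  have hsum := sum_le_sum_floor_add_card (range D)
    fun p ↦ ((polyLen D mh p : ℚ) - 1) / (mv / D : ℕ)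
  rw [sum_polyLen_sub_one_div (Nat.div_pos_iff.mp h.1).1, card_range] at hsum
  have hcond : ((∑ p ∈ range D, ⌊((polyLen D mh p : ℚ) - 1) / (mv / D : ℕ)⌋ : ℤ) : ℚ) ≤ C - D :=
    mod_cast h.2
  linarith

lemma suffLenCond_of_sub_div_le (hk : 1 ≤ mv / D)
    (h : ((mh : ℚ) - D) / (mv / D : ℕ) ≤ C + 1 - 2 * D) : SuffLenCond C D mh mv := by
  refine ⟨hk, Int.lt_add_one_iff.mp ?_⟩
  have hD : 0 < D := (Nat.div_pos_iff.mp hk).1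
  have hsum := sum_ceil_lt_sum_add_card (nonempty_range_iff.mpr hD.ne')
    fun p ↦ ((polyLen D mh p : ℚ) - 1) / (mv / D : ℕ)
  rw [sum_polyLen_sub_one_div hD, card_range] at hsum
  have hlt : ((∑ p ∈ range D, ⌈((polyLen D mh p : ℚ) - 1) / (mv / D : ℕ)⌉ : ℤ) : ℚ) <
      C - D + 1 := by linarith
  exact_mod_cast hlt

lemma SuffLenCond.sub_div_le (h : SuffLenCond C D mh mv) :
    ((mh : ℚ) - D) / (mv / D : ℕ) ≤ C - D := by
  rw [← sum_polyLen_sub_one_div (Nat.div_pos_iff.mp h.1).1]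
  exact (sum_le_sum_ceil _ _).trans (mod_cast h.2)

lemma suffLenCond_self (hD : 0 < D) (hCD : 2 * D ≤ C) (hmh : D ≤ mh) :
    SuffLenCond C D mh mh := by
  refine ⟨Nat.div_pos hmh hD, ?_⟩
  have hterm (p : ℕ) : ⌈((polyLen D mh p : ℚ) - 1) / (mh / D : ℕ)⌉ ≤ 1 := by
    have hpoly : (polyLen D mh p : ℚ) ≤ (mh / D : ℕ) + 1 :=
      (Int.cast_le.mpr (polyLen_le_div_add_one D mh p)).trans_eq (by push_cast; rfl)
    rw [Int.ceil_le, Int.cast_one]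
    exact div_le_one_of_le₀ (by linarith) (Nat.cast_nonneg _)
  calc ∑ p ∈ range D, ⌈((polyLen D mh p : ℚ) - 1) / (mh / D : ℕ)⌉
      ≤ ∑ _p ∈ range D, (1 : ℤ) := sum_le_sum fun p _ ↦ hterm p
    _ = D := by simp
    _ ≤ (C : ℤ) - D := by omega

end LengthConditions

section LengthBounds

variable {C D mh mv : ℕ}

lemma NecLenCond.le (h : NecLenCond C D mh mv) : D ≤ mv :=
  (Nat.div_pos_iff.mp h.1).2

lemma NecLenCond.mvL_le (h : NecLenCond C D mh mv) : mvL C D mh ≤ mv := by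
  have hk : (0 : ℚ) < (mv / D : ℕ) := mod_cast h.1
  have hmv : (D : ℚ) * (mv / D : ℕ) ≤ mv := mod_cast Nat.mul_div_le mv D
  have hmh : (mh : ℚ) - D ≤ C * (mv / D : ℕ) := (div_le_iff₀ hk).mp h.sub_div_le
  rw [mvL, Int.ceil_le, Int.cast_natCast]
  refine div_le_of_le_mul₀ C.cast_nonneg mv.cast_nonneg ?_
  calc (D : ℚ) * (mh - D) ≤ D * (C * (mv / D : ℕ)) := by gcongr
    _ = D * (mv / D : ℕ) * C := by ring
    _ ≤ mv * C := by gcongr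

lemma necLenCond_of_mvC_le (hD : 0 < D) (hDC : D < C) (hmh : D < mh) (h : mvC C D mh ≤ mv) :
    NecLenCond C D mh mv := by
  have hCD : (0 : ℚ) < C - D := sub_pos.mpr (mod_cast hDC)
  have hmhD : (0 : ℚ) < mh - D := sub_pos.mpr (mod_cast hmh)
  have hceil : ⌈((mh : ℚ) - D) / (C - D)⌉ ≤ ((mv / D : ℕ) : ℤ) := by
    rw [Int.natCast_div, Int.le_ediv_iff_mul_le (mod_cast hD), mul_comm]
    exact h
  have hk : (0 : ℤ) < (mv / D : ℕ) := (Int.ceil_pos.mpr (div_pos hmhD hCD)).trans_le hceil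
  have hdiv : ((mh : ℚ) - D) / (C - D) ≤ (mv / D : ℕ) :=
    (Int.ceil_le.mp hceil).trans_eq (Int.cast_natCast _)
  exact necLenCond_of_sub_div_le (mod_cast hk) ((div_le_comm₀ hCD (mod_cast hk)).mp hdiv)

lemma SuffLenCond.mvC_le (hDC : D < C) (h : SuffLenCond C D mh mv) :
    mvC C D mh ≤ mv := by
  have hCD : (0 : ℚ) < C - D := sub_pos.mpr (mod_cast hDC)
  have hdiv : ((mh : ℚ) - D) / (C - D) ≤ (mv / D : ℕ) :=
    (div_le_comm₀ (mod_cast h.1) hCD).mp h.sub_div_le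
  calc mvC C D mh ≤ D * (mv / D : ℕ) := by
        rw [mvC]
        gcongr
        exact Int.ceil_le.mpr (mod_cast hdiv)
    _ ≤ mv := mod_cast Nat.mul_div_le mv D

lemma le_mvU (hCD : 2 * D ≤ C) (hmh : D ≤ mh) : (D : ℤ) ≤ mvU C D mh := by
  have hE : (0 : ℚ) ≤ C + 1 - 2 * D := by
    have : (2 : ℚ) * D ≤ C := mod_cast hCD
    linarith
  have hmhD : (0 : ℚ) ≤ mh - D := sub_nonneg.mpr (mod_cast hmh)
  exact le_add_of_nonneg_right (Int.ceil_nonneg (by positivity))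

lemma suffLenCond_of_mvU_le (hD : 0 < D) (hCD : 2 * D ≤ C) (hmh : D ≤ mh)
    (h : mvU C D mh ≤ mv) : SuffLenCond C D mh mv := by
  have hD' : (0 : ℚ) < D := mod_cast hD
  have hE : (0 : ℚ) < C + 1 - 2 * D := by
    have : (2 : ℚ) * D ≤ C := mod_cast hCD
    linarith
  have hk : 1 ≤ mv / D := Nat.div_pos (mod_cast (le_mvU hCD hmh).trans h) hD
  have hU : (D : ℚ) * (mh - D) / (C + 1 - 2 * D) ≤ mv - D := by
    have := Int.ceil_le.mp (le_sub_iff_add_le'.mpr h)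
    exact_mod_cast this
  have hmv : (mv : ℚ) - D ≤ D * (mv / D : ℕ) := by
    have : (mv : ℚ) < (mv / D : ℕ) * D + D := mod_cast Nat.lt_div_mul_add hD
    linarith
  have hdiv : ((mh : ℚ) - D) / (C + 1 - 2 * D) ≤ (mv / D : ℕ) := by
    rw [mul_div_assoc] at hU
    exact le_of_mul_le_mul_left (hU.trans hmv) hD'
  exact suffLenCond_of_sub_div_le hk ((div_le_comm₀ hE (mod_cast hk)).mp hdiv)

end LengthBounds

section Lengths

variable {C D mh mv : ℕ}

lemma necLenCond_mvN (h : ∃ mv, NecLenCond C D mh mv) : NecLenCond C D mh (mvN C D mh) :=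
  Nat.sInf_mem (s := {mv | NecLenCond C D mh mv}) h

lemma mvN_le (h : NecLenCond C D mh mv) : mvN C D mh ≤ mv :=
  Nat.sInf_le h

lemma suffLenCond_mvS (h : ∃ mv, SuffLenCond C D mh mv) : SuffLenCond C D mh (mvS C D mh) :=
  Nat.sInf_mem (s := {mv | SuffLenCond C D mh mv}) h

lemma mvS_le (h : SuffLenCond C D mh mv) : mvS C D mh ≤ mv :=
  Nat.sInf_le h

lemma mvN_le_mvC (hD : 0 < D) (hDC : D < C) (hmh : D < mh) : (mvN C D mh : ℤ) ≤ mvC C D mh := by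
  have hC : 0 ≤ mvC C D mh := by
    have hCD : (0 : ℚ) ≤ C - D := sub_nonneg.mpr (mod_cast hDC.le)
    have hmhD : (0 : ℚ) ≤ mh - D := sub_nonneg.mpr (mod_cast hmh.le)
    exact mul_nonneg D.cast_nonneg (Int.ceil_nonneg (div_nonneg hmhD hCD))
  have hle : mvN C D mh ≤ (mvC C D mh).toNat :=
    mvN_le (necLenCond_of_mvC_le hD hDC hmh (Int.self_le_toNat _))
  omega

lemma mvS_le_mvU (hD : 0 < D) (hCD : 2 * D ≤ C) (hmh : D ≤ mh) :
    (mvS C D mh : ℤ) ≤ mvU C D mh := by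
  have hU : 0 ≤ mvU C D mh := D.cast_nonneg.trans (le_mvU hCD hmh)
  have hle : mvS C D mh ≤ (mvU C D mh).toNat :=
    mvS_le (suffLenCond_of_mvU_le hD hCD hmh (Int.self_le_toNat _))
  omega

end Lengths

/-- Proposition 4: if `C ≥ 2D` and `m_h > D`, then the sufficient and necessary lengths
are finite (the defining conditions are satisfiable) and
`max(D, m_v^L) ≤ m_v^N ≤ m_v^C ≤ m_v^S ≤ min(m_h, m_v^U)`. -/
theorem length_functional_relations (C D mh : ℕ) (hD : 0 < D) (hCD : 2 * D ≤ C)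
    (hmh : D < mh) :
    (∃ mv : ℕ, SuffLenCond C D mh mv) ∧ (∃ mv : ℕ, NecLenCond C D mh mv) ∧
    max (D : ℤ) (mvL C D mh) ≤ (mvN C D mh : ℤ) ∧
    (mvN C D mh : ℤ) ≤ mvC C D mh ∧
    mvC C D mh ≤ (mvS C D mh : ℤ) ∧
    (mvS C D mh : ℤ) ≤ min (mh : ℤ) (mvU C D mh) := by
  have hDC : D < C := by omega
  have hS : ∃ mv, SuffLenCond C D mh mv := ⟨mh, suffLenCond_self hD hCD hmh.le⟩
  have hN : ∃ mv, NecLenCond C D mh mv :=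
    ⟨_, necLenCond_of_mvC_le hD hDC hmh (Int.self_le_toNat _)⟩
  refine ⟨hS, hN, max_le ?_ ?_, mvN_le_mvC hD hDC hmh, ?_, le_min ?_ (mvS_le_mvU hD hCD hmh.le)⟩
  · exact_mod_cast (necLenCond_mvN hN).le
  · exact (necLenCond_mvN hN).mvL_le
  · exact (suffLenCond_mvS hS).mvC_le hDC
  · exact_mod_cast mvS_le (suffLenCond_self hD hCD hmh.le)
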